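/- Let μ, ν be Borel probability measures on ℝ with finite first moments. Then μ and ν are in convex order (μ ≼_c ν) if and only if ∫₀ˣ (F_μ^{-1}(u) − F_ν^{-1}(u)) du ≥ 0 for every x ∈ [0,1], with equality for x = 1. -/

import Mathlib

open MeasureTheory

noncomputable section

/-- The quantile function `F_α⁻¹(u) = inf { y : α((-∞, y]) ≥ u }`. -/
def quantile (α : Measure ℝ) (u : ℝ) : ℝ :=
  sInf {y : ℝ | ENNReal.ofReal u ≤ α (Set.Iic y)}

/-- Convex order on `ℝ`: `∫ f dμ ≤ ∫ f dν` for all convex `f` integrable w.r.t. both. -/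
def ConvexOrder (μ ν : Measure ℝ) : Prop :=
  ∀ f : ℝ → ℝ, ConvexOn ℝ Set.univ f →
    Integrable f μ → Integrable f ν → ∫ x, f x ∂μ ≤ ∫ x, f x ∂ν

/-!
The quantile function of `α` pushes the uniform law on `(0, 1)` forward to `α`, so everything can be
expressed through `q = quantile μ` and `p = quantile ν`.

If `μ ≼_c ν`, testing against `±y` gives equality of the means. Since `q` is monotone,
`∫₀ˣ (c - q) ≤ ∫ (c - y)⁺ dμ`, with equality when `c = q x`; comparing the two
measures at `c = p x` gives the inequality of the partial integrals.

Conversely, `f(q) - f(p) ≤ f'(q) (q - p)` by convexity, and `f'(q)` is monotone. The integral of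
a bounded monotone function against a function `h` with nonnegative partial integrals and zero total
integral is nonpositive: by the layer cake formula it is an average of tail integrals of `h`.
Boundedness is obtained by replacing `f` outside `[-r, r]` with its tangents at the endpoints
and letting `r → ∞`.
-/

open Set Filter Topology ProbabilityTheory

section Quantile

variable (α : Measure ℝ)

theorem nonempty_setOf_le_cdf {u : ℝ} (hu : u < 1) : {y : ℝ | u ≤ cdf α y}.Nonempty :=
  ((tendsto_cdf_atTop α).eventually_const_le hu).exists

theorem bddBelow_setOf_le_cdf {u : ℝ} (hu : 0 < u) : BddBelow {y : ℝ | u ≤ cdf α y} := by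
  obtain ⟨z, hz⟩ := ((tendsto_cdf_atBot α).eventually_lt_const hu).exists
  exact ⟨z, fun w hw ↦ le_of_lt <| (monotone_cdf α).reflect_lt (hz.trans_le hw)⟩

variable [IsProbabilityMeasure α]

theorem quantile_eq_sInf_le_cdf (u : ℝ) : quantile α u = sInf {y : ℝ | u ≤ cdf α y} := by
  simp only [quantile, ← ofReal_cdf, ENNReal.ofReal_le_ofReal_iff (cdf_nonneg α _)]

theorem quantile_le_iff_le_cdf {u y : ℝ} (hu : u ∈ Ioo (0 : ℝ) 1) :
    quantile α u ≤ y ↔ u ≤ cdf α y := by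
  rw [quantile_eq_sInf_le_cdf]
  refine ⟨fun h ↦ ?_, fun h ↦ csInf_le (bddBelow_setOf_le_cdf α hu.1) h⟩
  have right_cont : Tendsto (cdf α) (𝓝[>] y) (𝓝 (cdf α y)) :=
    ((cdf α).right_continuous y).mono Ioi_subset_Ici_self
  refine ge_of_tendsto right_cont ?_
  filter_upwards [self_mem_nhdsWithin] with z hz
  obtain ⟨w, hw, hwz⟩ := exists_lt_of_csInf_lt (nonempty_setOf_le_cdf α hu.2) (h.trans_lt hz)
  exact hw.trans (monotone_cdf α hwz.le)

theorem monotoneOn_quantile : MonotoneOn (quantile α) (Ioo 0 1) := fun _u hu _v hv huv ↦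
  (quantile_le_iff_le_cdf α hu).2 <| huv.trans <| (quantile_le_iff_le_cdf α hv).1 le_rfl

theorem aemeasurable_quantile : AEMeasurable (quantile α) (volume.restrict (Ioo 0 1)) :=
  aemeasurable_restrict_of_monotoneOn measurableSet_Ioo (monotoneOn_quantile α)

theorem map_quantile_volume_restrict_Ioo :
    (volume.restrict (Ioo 0 1)).map (quantile α) = α := by
  refine Measure.ext_of_Iic _ _ fun y ↦ ?_
  have preimage_eq : quantile α ⁻¹' Iic y ∩ Ioo 0 1 = Iic (cdf α y) ∩ Ioo 0 1 := by
    ext u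
    exact and_congr_left fun hu ↦ quantile_le_iff_le_cdf α hu
  have Iic_ae_eq : (Iic (cdf α y) ∩ Ioo 0 1 : Set ℝ) =ᵐ[volume] Ioc 0 (cdf α y) := by
    filter_upwards [Measure.ae_ne volume 1] with u hu
    have := cdf_le_one α y
    exact propext ⟨fun h ↦ ⟨h.2.1, h.1⟩, fun h ↦ ⟨h.2, h.1, (h.2.trans this).lt_of_ne hu⟩⟩
  rw [Measure.map_apply_of_aemeasurable (aemeasurable_quantile α) measurableSet_Iic,
    Measure.restrict_apply' measurableSet_Ioo, preimage_eq, measure_congr Iic_ae_eq,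
    Real.volume_Ioc, sub_zero, ofReal_cdf]

variable {α} {E : Type*} [NormedAddCommGroup E] {f : ℝ → E}

theorem intervalIntegral_comp_quantile [NormedSpace ℝ E] (hf : AEStronglyMeasurable f α) :
    ∫ u in (0 : ℝ)..1, f (quantile α u) = ∫ y, f y ∂α := by
  rw [intervalIntegral.integral_of_le zero_le_one, integral_Ioc_eq_integral_Ioo,
    ← integral_map (aemeasurable_quantile α) (by rwa [map_quantile_volume_restrict_Ioo]),
    map_quantile_volume_restrict_Ioo]

theorem intervalIntegrable_comp_quantile (hf : Integrable f α) :
    IntervalIntegrable (fun u ↦ f (quantile α u)) volume 0 1 := by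
  rw [intervalIntegrable_iff_integrableOn_Ioo_of_le zero_le_one]
  rw [← map_quantile_volume_restrict_Ioo α] at hf
  exact hf.comp_aemeasurable (aemeasurable_quantile α)

end Quantile

section PutPayoff

variable {α : Measure ℝ} [IsProbabilityMeasure α] {x : ℝ}

theorem integral_max_sub_zero_eq_add (hα : Integrable (fun y ↦ y) α) (c : ℝ)
    (hx : x ∈ Icc (0 : ℝ) 1) :
    ∫ y, max (c - y) 0 ∂α = (∫ u in (0 : ℝ)..x, max (c - quantile α u) 0) +
      ∫ u in x..1, max (c - quantile α u) 0 := by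
  have put_int : Integrable (fun y ↦ max (c - y) 0) α := ((integrable_const c).sub hα).pos_part
  have comp_int := intervalIntegrable_comp_quantile put_int
  have hx' : x ∈ uIcc (0 : ℝ) 1 := by rwa [uIcc_of_le zero_le_one]
  rw [← intervalIntegral_comp_quantile put_int.aestronglyMeasurable]
  exact (intervalIntegral.integral_add_adjacent_intervals
    (comp_int.mono_set (uIcc_subset_uIcc_left hx'))
    (comp_int.mono_set (uIcc_subset_uIcc_right hx'))).symm

theorem intervalIntegral_sub_quantile_le (hα : Integrable (fun y ↦ y) α) (c : ℝ)
    (hx : x ∈ Icc (0 : ℝ) 1) :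
    ∫ u in (0 : ℝ)..x, (c - quantile α u) ≤ ∫ y, max (c - y) 0 ∂α := by
  have hx' : uIcc 0 x ⊆ uIcc (0 : ℝ) 1 :=
    uIcc_subset_uIcc_left (by rwa [uIcc_of_le zero_le_one])
  have diff_int := (integrable_const c).sub hα
  have left_le : ∫ u in (0 : ℝ)..x, (c - quantile α u) ≤
      ∫ u in (0 : ℝ)..x, max (c - quantile α u) 0 :=
    intervalIntegral.integral_mono_on hx.1
      ((intervalIntegrable_comp_quantile diff_int).mono_set hx')
      ((intervalIntegrable_comp_quantile diff_int.pos_part).mono_set hx')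
      fun u _ ↦ le_max_left _ _
  have right_nonneg : 0 ≤ ∫ u in x..1, max (c - quantile α u) 0 :=
    intervalIntegral.integral_nonneg_of_forall hx.2 fun u ↦ le_max_right _ _
  rw [integral_max_sub_zero_eq_add hα c hx]
  linarith

theorem integral_max_quantile_sub_zero (hα : Integrable (fun y ↦ y) α)
    (hx : x ∈ Ioo (0 : ℝ) 1) :
    ∫ y, max (quantile α x - y) 0 ∂α =
      ∫ u in (0 : ℝ)..x, (quantile α x - quantile α u) := by
  have left_eq : ∫ u in (0 : ℝ)..x, max (quantile α x - quantile α u) 0 =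
      ∫ u in (0 : ℝ)..x, (quantile α x - quantile α u) :=
    intervalIntegral.integral_congr_Ioo_of_le hx.1.le fun u hu ↦ max_eq_left <|
      sub_nonneg.2 <| monotoneOn_quantile α ⟨hu.1, hu.2.trans hx.2⟩ hx hu.2.le
  have right_eq : ∫ u in x..1, max (quantile α x - quantile α u) 0 = ∫ _u in x..1, (0 : ℝ) :=
    intervalIntegral.integral_congr_Ioo_of_le hx.2.le fun u hu ↦ max_eq_right <|
      sub_nonpos.2 <| monotoneOn_quantile α hx ⟨hx.1.trans hu.1, hu.2⟩ hu.1.le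
  rw [integral_max_sub_zero_eq_add hα _ (Ioo_subset_Icc_self hx), left_eq, right_eq,
    intervalIntegral.integral_zero, add_zero]

end PutPayoff

section LayerCake

variable {X : Type*} [MeasurableSpace X] {ρ : Measure X} {g h : X → ℝ} {m M : ℝ}

theorem integrable_mul_of_ae_mem_Icc (hg : AEMeasurable g ρ) (hgb : ∀ᵐ x ∂ρ, g x ∈ Icc m M)
    (hh : Integrable h ρ) : Integrable (fun x ↦ g x * h x) ρ :=
  hh.bdd_mul hg.aestronglyMeasurable (hgb.mono fun _ hx ↦ abs_le_max_abs_abs hx.1 hx.2)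

theorem integral_sub_mul_eq_integral_setIntegral [SFinite ρ] (hg : AEMeasurable g ρ)
    (hgb : ∀ᵐ x ∂ρ, g x ∈ Icc m M) (hh : Integrable h ρ) :
    ∫ x, (g x - m) * h x ∂ρ = ∫ t in Ioc m M, ∫ x in {x | t < g x}, h x ∂ρ := by
  let K : ℝ × X → ℝ := {p | p.1 < g p.2}.indicator fun p ↦ h p.2
  have K_int : Integrable K ((volume.restrict (Ioc m M)).prod ρ) :=
    (hh.comp_snd _).indicator₀ (nullMeasurableSet_lt measurable_fst.aemeasurable hg.comp_snd)
  have integral_K_left {x : X} (hx : g x ∈ Icc m M) :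
      ∫ t in Ioc m M, K (t, x) = (g x - m) * h x := by
    have slice : Ioc m M ∩ Iio (g x) = Ioo m (g x) := by
      ext t
      exact ⟨fun ht ↦ ⟨ht.1.1, ht.2⟩, fun ht ↦ ⟨⟨ht.1, ht.2.le.trans hx.2⟩, ht.2⟩⟩
    change ∫ t in Ioc m M, (Iio (g x)).indicator (fun _ ↦ h x) t = _
    rw [setIntegral_indicator measurableSet_Iio, slice, setIntegral_const,
      Real.volume_real_Ioo_of_le hx.1, smul_eq_mul]
  calc
    ∫ x, (g x - m) * h x ∂ρ = ∫ x, (∫ t in Ioc m M, K (t, x)) ∂ρ :=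
      integral_congr_ae (hgb.mono fun _ hx ↦ (integral_K_left hx).symm)
    _ = ∫ t in Ioc m M, ∫ x, K (t, x) ∂ρ :=
      (integral_integral_swap (f := fun t x ↦ K (t, x)) K_int).symm
    _ = ∫ t in Ioc m M, ∫ x in {x | t < g x}, h x ∂ρ :=
      integral_congr_ae <| ae_of_all _ fun _ ↦
        integral_indicator₀ (nullMeasurableSet_lt aemeasurable_const hg)

theorem integral_mul_nonpos_of_setIntegral_superlevel_nonpos [SFinite ρ] (hg : AEMeasurable g ρ)
    (hgb : ∀ᵐ x ∂ρ, g x ∈ Icc m M) (hh : Integrable h ρ) (h_zero : ∫ x, h x ∂ρ = 0)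
    (h_superlevel : ∀ t, ∫ x in {x | t < g x}, h x ∂ρ ≤ 0) : ∫ x, g x * h x ∂ρ ≤ 0 :=
  calc
    ∫ x, g x * h x ∂ρ = ∫ x, (g x - m) * h x ∂ρ := by
      simp only [sub_mul]
      rw [integral_sub (integrable_mul_of_ae_mem_Icc hg hgb hh) (hh.const_mul m),
        integral_const_mul, h_zero, mul_zero, sub_zero]
    _ = ∫ t in Ioc m M, ∫ x in {x | t < g x}, h x ∂ρ :=
      integral_sub_mul_eq_integral_setIntegral hg hgb hh
    _ ≤ 0 := integral_nonpos h_superlevel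

end LayerCake

section MonotoneIntegrand

variable {a b : ℝ}

theorem exists_superlevel_ae_eq_Ioi {β : Type*} [Preorder β] {g : ℝ → β} (hab : a ≤ b)
    (hg : MonotoneOn g (Ioo a b)) (t : β) :
    ∃ s ∈ Icc a b, {u | t < g u} =ᵐ[volume.restrict (Ioo a b)] Ioi s := by
  let A := insert b {u ∈ Ioo a b | t < g u}
  have A_lower : a ∈ lowerBounds A := by
    rintro u (rfl | hu)
    exacts [hab, hu.1.1.le]
  have b_mem : b ∈ A := mem_insert _ _
  refine ⟨sInf A, ⟨le_csInf ⟨b, b_mem⟩ A_lower, csInf_le ⟨a, A_lower⟩ b_mem⟩, ?_⟩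
  rw [eventuallyEq_set]
  filter_upwards [ae_restrict_mem measurableSet_Ioo,
    ae_restrict_of_ae (Measure.ae_ne volume (sInf A))] with u hu u_ne
  constructor
  · exact fun htu ↦ (csInf_le ⟨a, A_lower⟩ (Or.inr ⟨hu, htu⟩)).lt_of_ne' u_ne
  · intro hsu
    obtain ⟨w, rfl | hw, hwu⟩ := exists_lt_of_csInf_lt ⟨b, b_mem⟩ hsu
    · exact absurd hu.2 hwu.not_gt
    · exact hw.2.trans_le (hg hw.1 hu hwu.le)

variable {g h : ℝ → ℝ} {m M : ℝ}

theorem setIntegral_Ioi_restrict_Ioo_nonpos {s : ℝ} (hs : s ∈ Icc a b)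
    (hh : IntervalIntegrable h volume a b) (h_partial : 0 ≤ ∫ u in a..s, h u)
    (h_zero : ∫ u in a..b, h u = 0) :
    ∫ u in Ioi s, h u ∂(volume.restrict (Ioo a b)) ≤ 0 := by
  have Ioi_inter : Ioi s ∩ Ioo a b = Ioo s b := by
    rw [← Ioi_inter_Iio, ← inter_assoc, Ioi_inter_Ioi, sup_eq_left.2 hs.1, Ioi_inter_Iio]
  have hs' : s ∈ uIcc a b := Icc_subset_uIcc hs
  have split := intervalIntegral.integral_add_adjacent_intervals
    (hh.mono_set (uIcc_subset_uIcc_left hs')) (hh.mono_set (uIcc_subset_uIcc_right hs'))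
  rw [Measure.restrict_restrict measurableSet_Ioi, Ioi_inter, ← integral_Ioc_eq_integral_Ioo,
    ← intervalIntegral.integral_of_le hs.2]
  linarith

theorem intervalIntegral_mul_nonpos_of_monotoneOn (hab : a ≤ b) (hg : MonotoneOn g (Ioo a b))
    (hgb : ∀ u ∈ Ioo a b, g u ∈ Icc m M) (hh : IntervalIntegrable h volume a b)
    (h_partial : ∀ x ∈ Icc a b, 0 ≤ ∫ u in a..x, h u) (h_zero : ∫ u in a..b, h u = 0) :
    ∫ u in a..b, g u * h u ≤ 0 := by
  have integral_eq (k : ℝ → ℝ) : ∫ u in a..b, k u = ∫ u in Ioo a b, k u := by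
    rw [intervalIntegral.integral_of_le hab, integral_Ioc_eq_integral_Ioo]
  rw [integral_eq]
  refine integral_mul_nonpos_of_setIntegral_superlevel_nonpos (m := m) (M := M)
    (aemeasurable_restrict_of_monotoneOn measurableSet_Ioo hg)
    ((ae_restrict_mem measurableSet_Ioo).mono hgb)
    ((intervalIntegrable_iff_integrableOn_Ioo_of_le hab).1 hh) (by rw [← integral_eq, h_zero])
    fun t ↦ ?_
  obtain ⟨s, hs, superlevel_eq⟩ := exists_superlevel_ae_eq_Ioi hab hg t
  rw [setIntegral_congr_set superlevel_eq]
  exact setIntegral_Ioi_restrict_Ioo_nonpos hs hh (h_partial s hs) h_zero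

end MonotoneIntegrand

section Tangent

/-- The value at `x` of the line through `(p, f p)` whose slope is the right derivative of `f`
at `p`. For convex `f` it supports the graph of `f` at `p`. -/
def rightTangent (f : ℝ → ℝ) (p x : ℝ) : ℝ :=
  f p + derivWithin f (Ioi p) p * (x - p)

/-- The projection of `x` onto the interval `[-r, r]`, used to truncate functions on `ℝ`. It is
written with `max` and `min` to avoid carrying a proof of `-r ≤ r`. -/
def clamp (r x : ℝ) : ℝ := max (-r) (min r x)

/-- The function that agrees with `f` on `[-r, r]` and follows the right tangents of `f` at `-r` and
`r` outside. For convex `f` it approximates `f` from below by functions of bounded slope. -/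
def tangentExtension (f : ℝ → ℝ) (r x : ℝ) : ℝ := rightTangent f (clamp r x) x

variable {f : ℝ → ℝ} {r x : ℝ}

theorem monotone_clamp (r : ℝ) : Monotone (clamp r) := fun _ _ h ↦
  max_le_max le_rfl (min_le_min le_rfl h)

theorem clamp_mem_Icc (hr : 0 ≤ r) (x : ℝ) : clamp r x ∈ Icc (-r) r :=
  ⟨le_max_left _ _, max_le (neg_le_self hr) (min_le_left _ _)⟩

theorem clamp_eq_self (hx : |x| ≤ r) : clamp r x = x := by
  rw [clamp, min_eq_right (abs_le.1 hx).2, max_eq_right (abs_le.1 hx).1]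

theorem clamp_mem_uIcc_zero (hr : 0 ≤ r) (x : ℝ) : clamp r x ∈ uIcc 0 x := by
  rw [mem_uIcc, clamp]
  grind

theorem monotone_rightDeriv_of_convexOn_univ (hf : ConvexOn ℝ univ f) :
    Monotone fun p ↦ derivWithin f (Ioi p) p := by
  simpa only [interior_univ, monotoneOn_univ] using hf.monotoneOn_rightDeriv

theorem rightTangent_le (hf : ConvexOn ℝ univ f) (p x : ℝ) : rightTangent f p x ≤ f x := by
  have hp : p ∈ interior (univ : Set ℝ) := by simp only [interior_univ, mem_univ]
  unfold rightTangent
  rcases lt_trichotomy p x with hpx | rfl | hxp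
  · have := hf.rightDeriv_le_slope_of_mem_interior hp (mem_univ x) hpx
    rw [slope_def_field, le_div_iff₀ (sub_pos.2 hpx)] at this
    linarith
  · simp
  · have := (hf.slope_le_leftDeriv_of_mem_interior (mem_univ x) hp hxp).trans
      (hf.leftDeriv_le_rightDeriv_of_mem_interior hp)
    rw [slope_def_field, div_le_iff₀ (sub_pos.2 hxp)] at this
    linarith

theorem rightTangent_le_rightTangent (hf : ConvexOn ℝ univ f) {p q : ℝ} (hp : p ∈ uIcc q x) :
    rightTangent f q x ≤ rightTangent f p x := by
  have tangent_le : rightTangent f q p ≤ f p := rightTangent_le hf q p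
  have slope_le : derivWithin f (Ioi q) q * (x - p) ≤ derivWithin f (Ioi p) p * (x - p) := by
    have deriv_mono := monotone_rightDeriv_of_convexOn_univ hf
    rcases mem_uIcc.1 hp with ⟨hqp, hpx⟩ | ⟨hxp, hpq⟩
    · exact mul_le_mul_of_nonneg_right (deriv_mono hqp) (sub_nonneg.2 hpx)
    · exact mul_le_mul_of_nonpos_right (deriv_mono hpq) (sub_nonpos.2 hxp)
  unfold rightTangent at *
  linarith

theorem tangentExtension_eq_self (hx : |x| ≤ r) : tangentExtension f r x = f x := by
  rw [tangentExtension, clamp_eq_self hx, rightTangent, sub_self, mul_zero, add_zero]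

theorem tangentExtension_sub_le (hf : ConvexOn ℝ univ f) (r x y : ℝ) :
    tangentExtension f r x - f y ≤ derivWithin f (Ioi (clamp r x)) (clamp r x) * (x - y) := by
  have tangent_le := rightTangent_le hf (clamp r x) y
  unfold tangentExtension rightTangent at *
  linarith

theorem measurable_tangentExtension (hf : ConvexOn ℝ univ f) (r : ℝ) :
    Measurable (tangentExtension f r) := by
  have clamp_meas : Measurable (clamp r) := (monotone_clamp r).measurable
  have f_meas : Measurable f := (continuousOn_univ.1 (hf.continuousOn isOpen_univ)).measurable
  exact (f_meas.comp clamp_meas).add <|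
    ((monotone_rightDeriv_of_convexOn_univ hf).measurable.comp clamp_meas).mul
      (measurable_id.sub clamp_meas)

theorem norm_tangentExtension_le (hf : ConvexOn ℝ univ f) (hr : 0 ≤ r) (x : ℝ) :
    ‖tangentExtension f r x‖ ≤ ‖f x‖ + ‖rightTangent f 0 x‖ := by
  have upper : tangentExtension f r x ≤ f x := rightTangent_le hf _ _
  have lower : rightTangent f 0 x ≤ tangentExtension f r x :=
    rightTangent_le_rightTangent hf (clamp_mem_uIcc_zero hr x)
  calc
    ‖tangentExtension f r x‖ ≤ max ‖rightTangent f 0 x‖ ‖f x‖ := abs_le_max_abs_abs lower upper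
    _ ≤ ‖f x‖ + ‖rightTangent f 0 x‖ :=
      max_le (le_add_of_nonneg_left (norm_nonneg _)) (le_add_of_nonneg_right (norm_nonneg _))

variable {α : Measure ℝ} [IsFiniteMeasure α]

theorem integrable_rightTangent (hα : Integrable (fun y ↦ y) α) (f : ℝ → ℝ) (p : ℝ) :
    Integrable (rightTangent f p) α :=
  (integrable_const _).add ((hα.sub (integrable_const p)).const_mul _)

theorem integrable_tangentExtension (hf : ConvexOn ℝ univ f) (hr : 0 ≤ r)
    (hα : Integrable (fun y ↦ y) α) (hfα : Integrable f α) :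
    Integrable (tangentExtension f r) α :=
  (hfα.norm.add (integrable_rightTangent hα f 0).norm).mono'
    (measurable_tangentExtension hf r).aestronglyMeasurable
    (ae_of_all _ (norm_tangentExtension_le hf hr))

theorem tendsto_integral_tangentExtension (hf : ConvexOn ℝ univ f)
    (hα : Integrable (fun y ↦ y) α) (hfα : Integrable f α) :
    Tendsto (fun r ↦ ∫ y, tangentExtension f r y ∂α) atTop (𝓝 (∫ y, f y ∂α)) := by
  refine tendsto_integral_filter_of_dominated_convergence _
    (.of_forall fun r ↦ (measurable_tangentExtension hf r).aestronglyMeasurable)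
    ((eventually_ge_atTop 0).mono fun r hr ↦ ae_of_all _ (norm_tangentExtension_le hf hr))
    (hfα.norm.add (integrable_rightTangent hα f 0).norm) (ae_of_all _ fun y ↦ ?_)
  exact tendsto_const_nhds.congr' <|
    (eventually_ge_atTop |y|).mono fun r hr ↦ (tangentExtension_eq_self hr).symm

end Tangent

section ConvexOrder

variable {μ ν : Measure ℝ}

namespace ConvexOrder

theorem integral_id_eq (h : ConvexOrder μ ν) (hμ : Integrable (fun y ↦ y) μ)
    (hν : Integrable (fun y ↦ y) ν) : ∫ y, y ∂μ = ∫ y, y ∂ν := by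
  have mean_le := h (fun y ↦ y) (convexOn_id convex_univ) hμ hν
  have neg_mean_le := h (fun y ↦ -y) (concaveOn_id convex_univ).neg hμ.neg hν.neg
  rw [integral_neg, integral_neg] at neg_mean_le
  exact le_antisymm mean_le (neg_le_neg_iff.1 neg_mean_le)

theorem integral_max_sub_zero_le [IsFiniteMeasure μ] [IsFiniteMeasure ν] (h : ConvexOrder μ ν)
    (hμ : Integrable (fun y ↦ y) μ) (hν : Integrable (fun y ↦ y) ν) (c : ℝ) :
    ∫ y, max (c - y) 0 ∂μ ≤ ∫ y, max (c - y) 0 ∂ν :=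
  h _ (((convexOn_const c convex_univ).sub (concaveOn_id convex_univ)).sup
      (convexOn_const 0 convex_univ))
    ((integrable_const c).sub hμ).pos_part ((integrable_const c).sub hν).pos_part

end ConvexOrder

variable [IsProbabilityMeasure μ] [IsProbabilityMeasure ν]

theorem intervalIntegral_quantile_sub (hμ : Integrable (fun y ↦ y) μ)
    (hν : Integrable (fun y ↦ y) ν) :
    ∫ u in (0 : ℝ)..1, (quantile μ u - quantile ν u) = (∫ y, y ∂μ) - ∫ y, y ∂ν := by
  rw [intervalIntegral.integral_sub (intervalIntegrable_comp_quantile hμ)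
      (intervalIntegrable_comp_quantile hν),
    intervalIntegral_comp_quantile hμ.1, intervalIntegral_comp_quantile hν.1]

namespace ConvexOrder

theorem intervalIntegral_quantile_sub_eq_zero (h : ConvexOrder μ ν)
    (hμ : Integrable (fun y ↦ y) μ) (hν : Integrable (fun y ↦ y) ν) :
    ∫ u in (0 : ℝ)..1, (quantile μ u - quantile ν u) = 0 := by
  rw [intervalIntegral_quantile_sub hμ hν, h.integral_id_eq hμ hν, sub_self]

theorem intervalIntegral_quantile_sub_nonneg (h : ConvexOrder μ ν)
    (hμ : Integrable (fun y ↦ y) μ) (hν : Integrable (fun y ↦ y) ν) {x : ℝ}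
    (hx : x ∈ Icc (0 : ℝ) 1) :
    0 ≤ ∫ u in (0 : ℝ)..x, (quantile μ u - quantile ν u) := by
  rcases hx.1.eq_or_lt with rfl | x_pos
  · rw [intervalIntegral.integral_same]
  rcases hx.2.eq_or_lt with rfl | x_lt_one
  · exact (h.intervalIntegral_quantile_sub_eq_zero hμ hν).ge
  set c := quantile ν x
  have sub_int {α : Measure ℝ} [IsProbabilityMeasure α] (hα : Integrable (fun y ↦ y) α) :
      IntervalIntegrable (fun u ↦ c - quantile α u) volume 0 x :=
    (intervalIntegrable_comp_quantile ((integrable_const c).sub hα)).mono_set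
      (uIcc_subset_uIcc_left (Icc_subset_uIcc hx))
  have partial_le : ∫ u in (0 : ℝ)..x, (c - quantile μ u) ≤
      ∫ u in (0 : ℝ)..x, (c - quantile ν u) :=
    calc
      ∫ u in (0 : ℝ)..x, (c - quantile μ u) ≤ ∫ y, max (c - y) 0 ∂μ :=
        intervalIntegral_sub_quantile_le hμ c hx
      _ ≤ ∫ y, max (c - y) 0 ∂ν := h.integral_max_sub_zero_le hμ hν c
      _ = ∫ u in (0 : ℝ)..x, (c - quantile ν u) :=
        integral_max_quantile_sub_zero hν ⟨x_pos, x_lt_one⟩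
  rw [← sub_nonneg, ← intervalIntegral.integral_sub (sub_int hν) (sub_int hμ)] at partial_le
  simpa only [sub_sub_sub_cancel_left] using partial_le

end ConvexOrder

variable {f : ℝ → ℝ} {r : ℝ}

theorem integral_tangentExtension_le_integral (hf : ConvexOn ℝ univ f) (hr : 0 ≤ r)
    (hμ : Integrable (fun y ↦ y) μ) (hν : Integrable (fun y ↦ y) ν) (hfμ : Integrable f μ)
    (hfν : Integrable f ν)
    (h_partial : ∀ x ∈ Icc (0 : ℝ) 1, 0 ≤ ∫ u in (0 : ℝ)..x, (quantile μ u - quantile ν u))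
    (h_zero : ∫ u in (0 : ℝ)..1, (quantile μ u - quantile ν u) = 0) :
    ∫ y, tangentExtension f r y ∂μ ≤ ∫ y, f y ∂ν := by
  let d : ℝ → ℝ := fun p ↦ derivWithin f (Ioi p) p
  let g : ℝ → ℝ := fun u ↦ d (clamp r (quantile μ u))
  have d_mono : Monotone d := monotone_rightDeriv_of_convexOn_univ hf
  have g_mono : MonotoneOn g (Ioo 0 1) :=
    (d_mono.comp (monotone_clamp r)).comp_monotoneOn (monotoneOn_quantile μ)
  have g_mem (u : ℝ) : g u ∈ Icc (d (-r)) (d r) :=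
    d_mono.mapsTo_Icc (clamp_mem_Icc hr _)
  have T_int := integrable_tangentExtension hf hr hμ hfμ
  have Tμ_int := intervalIntegrable_comp_quantile T_int
  have fν_int := intervalIntegrable_comp_quantile hfν
  have diff_int : IntervalIntegrable (fun u ↦ quantile μ u - quantile ν u) volume 0 1 :=
    (intervalIntegrable_comp_quantile hμ).sub (intervalIntegrable_comp_quantile hν)
  have g_diff_int :
      IntervalIntegrable (fun u ↦ g u * (quantile μ u - quantile ν u)) volume 0 1 := by
    rw [intervalIntegrable_iff_integrableOn_Ioo_of_le zero_le_one] at diff_int ⊢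
    exact integrable_mul_of_ae_mem_Icc
      (aemeasurable_restrict_of_monotoneOn measurableSet_Ioo g_mono) (ae_of_all _ g_mem) diff_int
  rw [← sub_nonpos]
  calc
    (∫ y, tangentExtension f r y ∂μ) - ∫ y, f y ∂ν =
        ∫ u in (0 : ℝ)..1, (tangentExtension f r (quantile μ u) - f (quantile ν u)) := by
      rw [intervalIntegral.integral_sub Tμ_int fν_int, intervalIntegral_comp_quantile T_int.1,
        intervalIntegral_comp_quantile hfν.1]
    _ ≤ ∫ u in (0 : ℝ)..1, g u * (quantile μ u - quantile ν u) :=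
      intervalIntegral.integral_mono_on zero_le_one (Tμ_int.sub fν_int) g_diff_int
        fun u _ ↦ tangentExtension_sub_le hf r _ _
    _ ≤ 0 := intervalIntegral_mul_nonpos_of_monotoneOn zero_le_one g_mono (fun u _ ↦ g_mem u)
      diff_int h_partial h_zero

theorem convexOrder_of_intervalIntegral_quantile_sub_nonneg (hμ : Integrable (fun y ↦ y) μ)
    (hν : Integrable (fun y ↦ y) ν)
    (h_partial : ∀ x ∈ Icc (0 : ℝ) 1, 0 ≤ ∫ u in (0 : ℝ)..x, (quantile μ u - quantile ν u))
    (h_zero : ∫ u in (0 : ℝ)..1, (quantile μ u - quantile ν u) = 0) : ConvexOrder μ ν :=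
  fun _f hf hfμ hfν ↦ le_of_tendsto (tendsto_integral_tangentExtension hf hμ hfμ) <|
    (eventually_ge_atTop 0).mono fun _r hr ↦
      integral_tangentExtension_le_integral hf hr hμ hν hfμ hfν h_partial h_zero

end ConvexOrder

theorem stmt2 (μ ν : Measure ℝ)
    [IsProbabilityMeasure μ] [IsProbabilityMeasure ν]
    (hμ : Integrable (fun x => |x|) μ) (hν : Integrable (fun y => |y|) ν) :
    ConvexOrder μ ν ↔
      ((∀ x ∈ Set.Icc (0 : ℝ) 1,
          0 ≤ ∫ u in (0 : ℝ)..x, (quantile μ u - quantile ν u)) ∧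
        (∫ u in (0 : ℝ)..1, (quantile μ u - quantile ν u)) = 0) := by
  have iμ : Integrable (fun x : ℝ ↦ x) μ :=
    (integrable_norm_iff measurable_id.aestronglyMeasurable).1 hμ
  have iν : Integrable (fun x : ℝ ↦ x) ν :=
    (integrable_norm_iff measurable_id.aestronglyMeasurable).1 hν
  constructor
  · intro h
    exact ⟨fun x hx ↦ h.intervalIntegral_quantile_sub_nonneg iμ iν hx,
      h.intervalIntegral_quantile_sub_eq_zero iμ iν⟩
  · rintro ⟨h0, h1⟩
    exact convexOrder_of_intervalIntegral_quantile_sub_nonneg iμ iν h0 h1
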